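/- arXiv:2112.12007 — 2 statements merged into one kernel-verified Lean document; each statement's English description precedes it below -/
import Mathlib

section
/- Let τ > 0 be real and define u : ℝ → ℂ by u(r) := (i/(2τh)) ∫_ℝ e^{iτ|r−r'|/h} f(r') dr'. Then u is twice differentiable on ℝ and satisfies −h² u''(r) − τ² u(r) = f(r) for every r ∈ ℝ; moreover, for every r > b, u(r) = (i/(2τh)) e^{iτr/h} ∫_a^b e^{−iτr'/h} f(r') dr', and for every r < a, u(r) = (i/(2τh)) e^{−iτr/h} ∫_a^b e^{iτr'/h} f(r') dr'. -/
open MeasureTheory Filter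

/-!
Put `k = iτ/h`. Splitting the integral at `r' = r` writes the convolution of `f` with `e^{k|·|}` as
`L + R`, where `L' = k L + f` and `R' = -k R - f`. In the first derivative `k (L - R)` the
contributions of `f` cancel; in the second they add up to `2 k f`, so that
`(L + R)'' = k² (L + R) + 2 k f`. The prefactor `c = i/(2τh)` satisfies `h² · 2 c k = -1`, and
`h² k² = -τ²`. To the right of the support of `f` only `L` survives, to the left only `R`.
-/

section HalfLine

variable {E : Type*} [NormedAddCommGroup E] {g : ℝ → E}

lemma integrableOn_Iic_of_integrableAtFilter_atBot (hg : LocallyIntegrable g)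
    (hbot : IntegrableAtFilter g atBot) (r : ℝ) : IntegrableOn g (Set.Iic r) :=
  integrableOn_Iic_iff_integrableAtFilter_atBot.2 ⟨hbot, hg.locallyIntegrableOn _⟩

lemma integrableOn_Ioi_of_integrableAtFilter_atTop (hg : LocallyIntegrable g)
    (htop : IntegrableAtFilter g atTop) (r : ℝ) : IntegrableOn g (Set.Ioi r) :=
  (integrableOn_Ici_iff_integrableAtFilter_atTop.2
    ⟨htop, hg.locallyIntegrableOn _⟩).mono_set Set.Ioi_subset_Ici_self

variable [NormedSpace ℝ E] [CompleteSpace E]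

lemma hasDerivAt_integral_Iic (hg : Continuous g) (hbot : IntegrableAtFilter g atBot) (r : ℝ) :
    HasDerivAt (fun x ↦ ∫ s in Set.Iic x, g s) (g r) r := by
  have hint := integrableOn_Iic_of_integrableAtFilter_atBot hg.locallyIntegrable hbot
  have hsplit (x : ℝ) : ∫ s in Set.Iic x, g s = (∫ s in Set.Iic r, g s) + ∫ s in r..x, g s := by
    rw [← intervalIntegral.integral_Iic_sub_Iic (hint r) (hint x), add_sub_cancel]
  rw [funext hsplit]
  exact (hg.integral_hasStrictDerivAt r r).hasDerivAt.const_add _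

lemma hasDerivAt_integral_Ioi (hg : Continuous g) (htop : IntegrableAtFilter g atTop) (r : ℝ) :
    HasDerivAt (fun x ↦ ∫ s in Set.Ioi x, g s) (-g r) r := by
  have hint := integrableOn_Ioi_of_integrableAtFilter_atTop hg.locallyIntegrable htop
  have hsplit (x : ℝ) : ∫ s in Set.Ioi x, g s = (∫ s in Set.Ioi r, g s) - ∫ s in r..x, g s := by
    rw [← intervalIntegral.integral_Ioi_sub_Ioi' (hint r) (hint x), sub_sub_cancel]
  rw [funext hsplit]
  exact (hg.integral_hasStrictDerivAt r r).hasDerivAt.const_sub _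

end HalfLine

lemma support_subset_Ioo_of_subset_Icc {α M : Type*} [LinearOrder α] [TopologicalSpace α]
    [OrderTopology α] [DenselyOrdered α] [NoMinOrder α] [NoMaxOrder α] [TopologicalSpace M]
    [T1Space M] [Zero M] {f : α → M} (hf : Continuous f) {a b : α}
    (hsupp : Function.support f ⊆ Set.Icc a b) : Function.support f ⊆ Set.Ioo a b := by
  have hopen : IsOpen (Function.support f) := isOpen_compl_singleton.preimage hf
  simpa only [interior_Icc] using interior_maximal hsupp hopen

lemma hasDerivAt_cexp_mul_ofReal (k : ℂ) (r : ℝ) :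
    HasDerivAt (fun x : ℝ ↦ Complex.exp (k * x)) (k * Complex.exp (k * r)) r := by
  simpa [mul_comm] using ((hasDerivAt_id (r : ℂ)).const_mul k).cexp.comp_ofReal

lemma cexp_mul_cexp_neg_mul (k x : ℂ) : Complex.exp (k * x) * Complex.exp (-k * x) = 1 := by
  rw [← Complex.exp_add, ← add_mul, add_neg_cancel, zero_mul, Complex.exp_zero]

lemma cexp_mul_abs_sub_of_le (k : ℂ) {r s : ℝ} (hsr : s ≤ r) :
    Complex.exp (k * |r - s|) = Complex.exp (k * r) * Complex.exp (-k * s) := by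
  rw [abs_of_nonneg (sub_nonneg.2 hsr), ← Complex.exp_add]
  push_cast
  ring_nf

lemma cexp_mul_abs_sub_of_ge (k : ℂ) {r s : ℝ} (hrs : r ≤ s) :
    Complex.exp (k * |r - s|) = Complex.exp (-k * r) * Complex.exp (k * s) := by
  rw [abs_sub_comm, cexp_mul_abs_sub_of_le k hrs, mul_comm]

variable {E : Type*} [NormedAddCommGroup E] [NormedSpace ℂ E]

lemma integrable_cexp_mul_smul (k : ℂ) {f : ℝ → E} (hf : Continuous f) (hc : HasCompactSupport f) :
    Integrable fun s : ℝ ↦ Complex.exp (k * s) • f s :=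
  Continuous.integrable_of_hasCompactSupport (by fun_prop) hc.smul_left

lemma intervalIntegral_smul_eq_integral {f : ℝ → E} (hf : Continuous f) {a b : ℝ}
    (hsupp : Function.support f ⊆ Set.Icc a b) (φ : ℝ → ℂ) :
    ∫ s in a..b, φ s • f s = ∫ s, φ s • f s :=
  intervalIntegral.integral_eq_integral_of_support_subset <|
    (Function.support_smul_subset_right φ f).trans <|
      (support_subset_Ioo_of_subset_Icc hf hsupp).trans Set.Ioo_subset_Ioc_self

/-- The convolution of `f` with `e^{k|·|}`. For `k ≠ 0` the kernel is `2k` times a fundamental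
solution of `∂² - k²`. -/
noncomputable def expConv (k : ℂ) (f : ℝ → E) (r : ℝ) : E :=
  ∫ s : ℝ, Complex.exp (k * |r - s|) • f s

/-- The contribution `∫_{-∞}^r e^{k(r-s)} f(s) ds` of the sources to the left of `r` to
`expConv k f r`, with the factor `e^{kr}` taken out of the integral. -/
noncomputable def expConvLeft (k : ℂ) (f : ℝ → E) (r : ℝ) : E :=
  Complex.exp (k * r) • ∫ s in Set.Iic r, Complex.exp (-k * s) • f s

/-- The contribution `∫_r^∞ e^{k(s-r)} f(s) ds` of the sources to the right of `r` to
`expConv k f r`, with the factor `e^{-kr}` taken out of the integral. -/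
noncomputable def expConvRight (k : ℂ) (f : ℝ → E) (r : ℝ) : E :=
  Complex.exp (-k * r) • ∫ s in Set.Ioi r, Complex.exp (k * s) • f s

lemma expConv_of_support_subset_Iic (k : ℂ) {f : ℝ → E} {r : ℝ}
    (hsupp : Function.support f ⊆ Set.Iic r) :
    expConv k f r = Complex.exp (k * r) • ∫ s : ℝ, Complex.exp (-k * s) • f s := by
  rw [expConv, ← integral_smul]
  refine integral_congr_ae (.of_forall fun s ↦ ?_)
  by_cases hs : f s = 0
  · simp [hs]
  · simp only [cexp_mul_abs_sub_of_le k (hsupp hs), mul_smul]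

lemma expConv_of_support_subset_Ici (k : ℂ) {f : ℝ → E} {r : ℝ}
    (hsupp : Function.support f ⊆ Set.Ici r) :
    expConv k f r = Complex.exp (-k * r) • ∫ s : ℝ, Complex.exp (k * s) • f s := by
  rw [expConv, ← integral_smul]
  refine integral_congr_ae (.of_forall fun s ↦ ?_)
  by_cases hs : f s = 0
  · simp [hs]
  · simp only [cexp_mul_abs_sub_of_ge k (hsupp hs), mul_smul]

section Derivatives

variable {k : ℂ} {f : ℝ → E}

lemma expConv_eq_left_add_right {r : ℝ}
    (hleft : IntegrableOn (fun s : ℝ ↦ Complex.exp (-k * s) • f s) (Set.Iic r))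
    (hright : IntegrableOn (fun s : ℝ ↦ Complex.exp (k * s) • f s) (Set.Ioi r)) :
    expConv k f r = expConvLeft k f r + expConvRight k f r := by
  have heq_left : Set.EqOn (fun s : ℝ ↦ Complex.exp (k * |r - s|) • f s)
      (fun s ↦ Complex.exp (k * r) • Complex.exp (-k * s) • f s) (Set.Iic r) := fun s hs ↦ by
    simp only [cexp_mul_abs_sub_of_le k hs, mul_smul]
  have heq_right : Set.EqOn (fun s : ℝ ↦ Complex.exp (k * |r - s|) • f s)
      (fun s ↦ Complex.exp (-k * r) • Complex.exp (k * s) • f s) (Set.Ioi r) := fun s hs ↦ by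
    simp only [cexp_mul_abs_sub_of_ge k (le_of_lt hs), mul_smul]
  have hint_left := IntegrableOn.congr_fun (hleft.smul (Complex.exp (k * r))) heq_left.symm
    measurableSet_Iic
  have hint_right := IntegrableOn.congr_fun (hright.smul (Complex.exp (-k * r))) heq_right.symm
    measurableSet_Ioi
  rw [expConv, ← intervalIntegral.integral_Iic_add_Ioi hint_left hint_right,
    setIntegral_congr_fun measurableSet_Iic heq_left,
    setIntegral_congr_fun measurableSet_Ioi heq_right,
    integral_smul, integral_smul, expConvLeft, expConvRight]

lemma expConv_eq_left_add_right_of_continuous (hf : Continuous f)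
    (hbot : IntegrableAtFilter (fun s : ℝ ↦ Complex.exp (-k * s) • f s) atBot)
    (htop : IntegrableAtFilter (fun s : ℝ ↦ Complex.exp (k * s) • f s) atTop) :
    expConv k f = expConvLeft k f + expConvRight k f := by
  have hloc (z : ℂ) : LocallyIntegrable fun s : ℝ ↦ Complex.exp (z * s) • f s :=
    Continuous.locallyIntegrable (by fun_prop)
  funext r
  exact expConv_eq_left_add_right
    (integrableOn_Iic_of_integrableAtFilter_atBot (hloc (-k)) hbot r)
    (integrableOn_Ioi_of_integrableAtFilter_atTop (hloc k) htop r)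

variable [CompleteSpace E]

lemma hasDerivAt_expConvLeft (hf : Continuous f)
    (hbot : IntegrableAtFilter (fun s : ℝ ↦ Complex.exp (-k * s) • f s) atBot) (r : ℝ) :
    HasDerivAt (expConvLeft k f) (k • expConvLeft k f r + f r) r := by
  refine ((hasDerivAt_cexp_mul_ofReal k r).smul
    (hasDerivAt_integral_Iic (by fun_prop) hbot r)).congr_deriv ?_
  rw [smul_smul, cexp_mul_cexp_neg_mul, one_smul, mul_smul, add_comm, expConvLeft]

lemma hasDerivAt_expConvRight (hf : Continuous f)
    (htop : IntegrableAtFilter (fun s : ℝ ↦ Complex.exp (k * s) • f s) atTop) (r : ℝ) :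
    HasDerivAt (expConvRight k f) (-k • expConvRight k f r - f r) r := by
  refine ((hasDerivAt_cexp_mul_ofReal (-k) r).smul
    (hasDerivAt_integral_Ioi (by fun_prop) htop r)).congr_deriv ?_
  rw [smul_neg, smul_smul, mul_comm, cexp_mul_cexp_neg_mul, one_smul, mul_smul, neg_add_eq_sub,
    expConvRight]

lemma hasDerivAt_expConv (hf : Continuous f)
    (hbot : IntegrableAtFilter (fun s : ℝ ↦ Complex.exp (-k * s) • f s) atBot)
    (htop : IntegrableAtFilter (fun s : ℝ ↦ Complex.exp (k * s) • f s) atTop) (r : ℝ) :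
    HasDerivAt (expConv k f) (k • (expConvLeft k f r - expConvRight k f r)) r := by
  rw [expConv_eq_left_add_right_of_continuous hf hbot htop]
  refine ((hasDerivAt_expConvLeft hf hbot r).add
    (hasDerivAt_expConvRight hf htop r)).congr_deriv ?_
  module

lemma hasDerivAt_deriv_expConv (hf : Continuous f)
    (hbot : IntegrableAtFilter (fun s : ℝ ↦ Complex.exp (-k * s) • f s) atBot)
    (htop : IntegrableAtFilter (fun s : ℝ ↦ Complex.exp (k * s) • f s) atTop) (r : ℝ) :
    HasDerivAt (deriv (expConv k f)) (k ^ 2 • expConv k f r + (2 * k) • f r) r := by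
  rw [funext fun x ↦ (hasDerivAt_expConv hf hbot htop x).deriv,
    expConv_eq_left_add_right_of_continuous hf hbot htop, Pi.add_apply]
  refine (((hasDerivAt_expConvLeft hf hbot r).sub
    (hasDerivAt_expConvRight hf htop r)).const_smul k).congr_deriv ?_
  module

end Derivatives

theorem stmt_2_general [CompleteSpace E] {h τ : ℂ} (hh : h ≠ 0) (hτ : τ ≠ 0) {a b : ℝ}
    {f : ℝ → E} (hf : Continuous f) (hsupp : Function.support f ⊆ Set.Icc a b) {u : ℝ → E}
    (hu : ∀ r : ℝ, u r = (Complex.I / (2 * τ * h)) •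
      ∫ r' : ℝ, Complex.exp (Complex.I * τ * |r - r'| / h) • f r') :
    (∀ r : ℝ, DifferentiableAt ℝ u r ∧ DifferentiableAt ℝ (deriv u) r) ∧
    (∀ r : ℝ, (-h ^ 2) • deriv (deriv u) r - τ ^ 2 • u r = f r) ∧
    (∀ r : ℝ, b < r →
      u r = (Complex.I / (2 * τ * h) * Complex.exp (Complex.I * τ * r / h)) •
        ∫ r' in a..b, Complex.exp (-(Complex.I * τ * r') / h) • f r') ∧
    (∀ r : ℝ, r < a →
      u r = (Complex.I / (2 * τ * h) * Complex.exp (-(Complex.I * τ * r) / h)) •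
        ∫ r' in a..b, Complex.exp (Complex.I * τ * r' / h) • f r') := by
  obtain ⟨k, hk⟩ : ∃ k, k = Complex.I * τ / h := ⟨_, rfl⟩
  obtain ⟨c, hc⟩ : ∃ c, c = Complex.I / (2 * τ * h) := ⟨_, rfl⟩
  have hk_sq : h ^ 2 * k ^ 2 = -τ ^ 2 := by rw [hk]; field_simp; rw [Complex.I_sq]
  have hck : h ^ 2 * (2 * c * k) = -1 := by rw [hk, hc]; field_simp; rw [Complex.I_sq]
  have hpos (x : ℂ) : Complex.I * τ * x / h = k * x := by rw [hk]; ring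
  have hneg (x : ℂ) : -(Complex.I * τ * x) / h = -k * x := by rw [hk]; ring
  simp only [hpos, hneg, ← hc] at hu ⊢
  have hu_eq : u = c • expConv k f := funext hu
  have hint (z : ℂ) : Integrable fun s : ℝ ↦ Complex.exp (z * s) • f s :=
    integrable_cexp_mul_smul z hf
      (HasCompactSupport.of_support_subset_isCompact isCompact_Icc hsupp)
  have hbot := (hint (-k)).integrableAtFilter atBot
  have htop := (hint k).integrableAtFilter atTop
  have hderiv : deriv u = c • deriv (expConv k f) := by
    funext r
    rw [hu_eq, deriv_const_smul_field, Pi.smul_apply]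
  have hderiv2 (r : ℝ) := (hasDerivAt_deriv_expConv hf hbot htop r).const_smul c
  refine ⟨fun r ↦ ⟨?_, ?_⟩, fun r ↦ ?_, fun r hr ↦ ?_, fun r hr ↦ ?_⟩
  · rw [hu_eq]
    exact ((hasDerivAt_expConv hf hbot htop r).const_smul c).differentiableAt
  · rw [hderiv]
    exact (hderiv2 r).differentiableAt
  · rw [hderiv, (hderiv2 r).deriv, hu_eq, Pi.smul_apply]
    linear_combination (norm := module) (-c * hk_sq) • expConv k f r - hck • f r
  · rw [hu_eq, Pi.smul_apply, intervalIntegral_smul_eq_integral hf hsupp, mul_smul,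
      expConv_of_support_subset_Iic k fun s hs ↦ (hsupp hs).2.trans hr.le]
  · rw [hu_eq, Pi.smul_apply, intervalIntegral_smul_eq_integral hf hsupp, mul_smul,
      expConv_of_support_subset_Ici k fun s hs ↦ hr.le.trans (hsupp hs).1]

/-- For real `τ > 0`, the function
`u(r) = (i/(2τh)) ∫ e^{iτ|r−r'|/h} f(r') dr'` is twice differentiable, solves
`−h²u'' − τ²u = f`, and satisfies the outgoing representation formulas for
`r > b` and `r < a`. -/
theorem stmt_2 (h : ℝ) (hh : 0 < h) (a b : ℝ) (hab : a ≤ b)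
    (f : ℝ → ℂ) (hf : Continuous f)
    (hsupp : ∀ r : ℝ, r ∉ Set.Icc a b → f r = 0)
    (τ : ℝ) (hτ : 0 < τ)
    (u : ℝ → ℂ)
    (hu : ∀ r : ℝ, u r = (Complex.I / (2 * (τ : ℂ) * (h : ℂ))) *
        ∫ r' : ℝ, Complex.exp (Complex.I * (τ : ℂ) * ((|r - r'| : ℝ) : ℂ) / (h : ℂ)) * f r') :
    (∀ r : ℝ, DifferentiableAt ℝ u r ∧ DifferentiableAt ℝ (deriv u) r) ∧
    (∀ r : ℝ, -(h : ℂ) ^ 2 * deriv (deriv u) r - (τ : ℂ) ^ 2 * u r = f r) ∧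
    (∀ r : ℝ, b < r →
      u r = (Complex.I / (2 * (τ : ℂ) * (h : ℂ))) *
          Complex.exp (Complex.I * (τ : ℂ) * (r : ℂ) / (h : ℂ)) *
        ∫ r' in a..b, Complex.exp (-(Complex.I * (τ : ℂ) * (r' : ℂ)) / (h : ℂ)) * f r') ∧
    (∀ r : ℝ, r < a →
      u r = (Complex.I / (2 * (τ : ℂ) * (h : ℂ))) *
          Complex.exp (-(Complex.I * (τ : ℂ) * (r : ℂ)) / (h : ℂ)) *
        ∫ r' in a..b, Complex.exp (Complex.I * (τ : ℂ) * (r' : ℂ) / (h : ℂ)) * f r') := by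
  simpa only [smul_eq_mul] using stmt_2_general (Complex.ofReal_ne_zero.2 hh.ne')
    (Complex.ofReal_ne_zero.2 hτ.ne') hf (Function.support_subset_iff'.2 hsupp) hu
end

section
/- Let ε ∈ (0,1), α > 0, and τ ∈ [0, 1−ε]. Let φ : ℝ → ℝ be continuously differentiable with 0 < φ(s) ≤ 1 and s·φ'(s) ≥ 0 for all s ∈ ℝ. Let w₁ : ℝ → ℝ be the odd function with w₁(s) = 1 − (1+s)^{−α} for s ≥ 0, so that w₁ is differentiable on ℝ with w₁'(s) = α (1+|s|)^{−(1+α)}. Set β := 2/ε and w := w₁ · φ^β. Then w and wφ are differentiable and for every s ∈ ℝ, w'(s) − τ (wφ)'(s) ≥ ε · φ(s)^β · α (1+|s|)^{−(1+α)}. -/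
/-!
Write `w = w₁ φ ^ β`. By the product rule,
`w' - τ (w φ)' = (1 - τ φ) w₁' φ ^ β + w₁ φ' φ ^ (β - 1) (β - τ φ (β + 1))`.
Since `τ φ ≤ 1 - ε`, the first term is at least `ε w₁' φ ^ β`. The second is nonnegative: `w₁` and
`φ'` both have the sign of `s`, and `τ φ (β + 1) ≤ (1 - ε) (β + 1) ≤ β` as soon as
`β ≥ 1 / ε - 1`, which leaves room for `β = 2 / ε`.
-/

open MeasureTheory Filter

theorem mul_nonneg_of_odd_of_mul_nonneg {R : Type*} [Ring R] [LinearOrder R]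
    [IsStrictOrderedRing R] {f g : R → R} (hf : f.Odd) (hf_nonneg : ∀ x, 0 ≤ x → 0 ≤ f x)
    (hg : ∀ x, 0 ≤ x * g x) (x : R) : 0 ≤ f x * g x := by
  rcases lt_trichotomy x 0 with hx | rfl | hx
  · have hfx : f x ≤ 0 := by simpa [hf x] using hf_nonneg (-x) (neg_nonneg.2 hx.le)
    exact mul_nonneg_of_nonpos_of_nonpos hfx (nonpos_of_mul_nonneg_right (hg x) hx)
  · simp [hf.map_zero]
  · exact mul_nonneg (hf_nonneg x hx.le) (nonneg_of_mul_nonneg_right (hg x) hx)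

section MulRpow

variable {f φ : ℝ → ℝ} {ε τ β s : ℝ}

theorem deriv_mul_rpow_sub_mul_deriv_mul_rpow_mul_self (hf : DifferentiableAt ℝ f s)
    (hφ : DifferentiableAt ℝ φ s) (hpos : 0 < φ s) :
    deriv (fun t => f t * φ t ^ β) s - τ * deriv (fun t => f t * φ t ^ β * φ t) s =
      (1 - τ * φ s) * (φ s ^ β * deriv f s) +
        f s * deriv φ s * (φ s ^ (β - 1) * (β - τ * φ s * (β + 1))) := by
  have hpow : φ s ^ (β - 1) * φ s = φ s ^ β := by
    rw [← Real.rpow_add_one hpos.ne', sub_add_cancel]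
  have hw : HasDerivAt (fun t => f t * φ t ^ β)
      (deriv f s * φ s ^ β + f s * (deriv φ s * β * φ s ^ (β - 1))) s :=
    hf.hasDerivAt.mul (hφ.hasDerivAt.rpow_const (.inl hpos.ne'))
  have hwφ : HasDerivAt (fun t => f t * φ t ^ β * φ t)
      ((deriv f s * φ s ^ β + f s * (deriv φ s * β * φ s ^ (β - 1))) * φ s +
        f s * φ s ^ β * deriv φ s) s :=
    hw.mul hφ.hasDerivAt
  rw [hw.deriv, hwφ.deriv]
  linear_combination τ * f s * deriv φ s * hpow

theorem le_deriv_mul_rpow_sub_mul_deriv_mul_rpow_mul_self (hε : 0 < ε) (hβ : 1 ≤ ε * (β + 1))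
    (hf : DifferentiableAt ℝ f s) (hφ : DifferentiableAt ℝ φ s) (hpos : 0 < φ s)
    (hτφ : τ * φ s ≤ 1 - ε) (hf' : 0 ≤ deriv f s) (hfφ' : 0 ≤ f s * deriv φ s) :
    ε * φ s ^ β * deriv f s ≤
      deriv (fun t => f t * φ t ^ β) s - τ * deriv (fun t => f t * φ t ^ β * φ t) s := by
  have hβ_add_one : 0 ≤ β + 1 := (pos_of_mul_pos_right (one_pos.trans_le hβ) hε.le).le
  have hcoeff : 0 ≤ β - τ * φ s * (β + 1) := by
    linarith [mul_le_mul_of_nonneg_right hτφ hβ_add_one]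
  calc ε * φ s ^ β * deriv f s = ε * (φ s ^ β * deriv f s) := mul_assoc _ _ _
    _ ≤ (1 - τ * φ s) * (φ s ^ β * deriv f s) := by
      gcongr
      linarith
    _ ≤ (1 - τ * φ s) * (φ s ^ β * deriv f s) +
        f s * deriv φ s * (φ s ^ (β - 1) * (β - τ * φ s * (β + 1))) :=
      le_add_of_nonneg_right (by positivity)
    _ = _ := (deriv_mul_rpow_sub_mul_deriv_mul_rpow_mul_self hf hφ hpos).symm

theorem stmt_8_general (hε : 0 < ε) (hβ : 1 ≤ ε * (β + 1)) (hf : Differentiable ℝ f)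
    (hφ : Differentiable ℝ φ) (hpos : ∀ s, 0 < φ s) (hτφ : ∀ s, τ * φ s ≤ 1 - ε)
    (hf' : ∀ s, 0 ≤ deriv f s) (hfφ' : ∀ s, 0 ≤ f s * deriv φ s) :
    Differentiable ℝ (fun s => f s * φ s ^ β) ∧
    Differentiable ℝ (fun s => f s * φ s ^ β * φ s) ∧
    ∀ s, ε * φ s ^ β * deriv f s ≤
      deriv (fun s => f s * φ s ^ β) s - τ * deriv (fun s => f s * φ s ^ β * φ s) s :=
  have hw : Differentiable ℝ (fun s => f s * φ s ^ β) :=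
    hf.mul (hφ.rpow_const fun s => .inl (hpos s).ne')
  ⟨hw, hw.mul hφ, fun s => le_deriv_mul_rpow_sub_mul_deriv_mul_rpow_mul_self hε hβ (hf s) (hφ s)
    (hpos s) (hτφ s) (hf' s) (hfφ' s)⟩

end MulRpow

/-- with `β = 2/ε` and `w = w₁ φ^β`, one has the pointwise lower
bound `w' − τ(wφ)' ≥ ε φ^β α (1+|s|)^{−(1+α)}`. -/
theorem stmt_8 (ε α τ : ℝ) (hε : ε ∈ Set.Ioo (0 : ℝ) 1) (hα : 0 < α)
    (hτ : τ ∈ Set.Icc (0 : ℝ) (1 - ε))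
    (φ : ℝ → ℝ) (hφ : ContDiff ℝ 1 φ)
    (hφpos : ∀ s : ℝ, 0 < φ s) (hφle : ∀ s : ℝ, φ s ≤ 1)
    (hφmono : ∀ s : ℝ, 0 ≤ s * deriv φ s)
    (w₁ : ℝ → ℝ) (hodd : ∀ s : ℝ, w₁ (-s) = -w₁ s)
    (hw₁ : ∀ s : ℝ, 0 ≤ s → w₁ s = 1 - (1 + s) ^ (-α))
    (hw₁diff : Differentiable ℝ w₁)
    (hw₁' : ∀ s : ℝ, deriv w₁ s = α * (1 + |s|) ^ (-(1 + α))) :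
    Differentiable ℝ (fun s => w₁ s * φ s ^ (2 / ε)) ∧
    Differentiable ℝ (fun s => w₁ s * φ s ^ (2 / ε) * φ s) ∧
    ∀ s : ℝ, ε * φ s ^ (2 / ε) * (α * (1 + |s|) ^ (-(1 + α))) ≤
      deriv (fun s => w₁ s * φ s ^ (2 / ε)) s
        - τ * deriv (fun s => w₁ s * φ s ^ (2 / ε) * φ s) s := by
  have hβ : 1 ≤ ε * (2 / ε + 1) := by
    rw [mul_add, mul_div_cancel₀ _ hε.1.ne']
    linarith [hε.1]
  have hτφ (s : ℝ) : τ * φ s ≤ 1 - ε := (mul_le_of_le_one_right hτ.1 (hφle s)).trans hτ.2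
  have hw₁_nonneg (s : ℝ) (hs : 0 ≤ s) : 0 ≤ w₁ s := by
    rw [hw₁ s hs, sub_nonneg]
    exact Real.rpow_le_one_of_one_le_of_nonpos (by linarith) (by linarith)
  have hw₁'_nonneg (s : ℝ) : 0 ≤ deriv w₁ s := by
    rw [hw₁']
    positivity
  simpa only [hw₁'] using stmt_8_general hε.1 hβ hw₁diff (hφ.differentiable one_ne_zero) hφpos hτφ
    hw₁'_nonneg (mul_nonneg_of_odd_of_mul_nonneg hodd hw₁_nonneg hφmono)
end
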